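/- Let A and B be N×N real symmetric matrices with eigenvalue sequences (λ_k^A) and (λ_k^B) listed in increasing order, and let μ_A = (1/N)∑_{k=1}^N δ_{λ_k^A} and μ_B = (1/N)∑_{k=1}^N δ_{λ_k^B} be the empirical spectral measures. Then the squared L²-Wasserstein distance satisfies W₂(μ_A, μ_B)² ≤ (1/N)·tr((A−B)²). -/

import Mathlib

open MeasureTheory

/-- Squared L²-Wasserstein distance between measures on ℝ,
defined as the infimum over couplings of the integral of |x-y|². -/
noncomputable def W2sq (μ ν : Measure ℝ) : ENNReal :=
  ⨅ π ∈ {π : Measure (ℝ × ℝ) | π.map Prod.fst = μ ∧ π.map Prod.snd = ν},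
    ∫⁻ p, ENNReal.ofReal (|p.1 - p.2| ^ 2) ∂π

/-!
Diagonalise `A = U diag(a) U*` and `B = V diag(b) V*`, and let `W = U* V`. Unitary invariance of the
Hilbert–Schmidt norm turns `tr((A - B)²)` into the squared norm of
`U* (A - B) V = diag(a) W - W diag(b)`, that is, into `∑ i j, |W i j|² (a i - b j)²`. The matrix
`|W i j|²` is doubly stochastic because `W` is unitary, so `|W i j|² / N` are the weights of a
coupling of the two spectral measures, and the cost of this coupling is exactly `tr((A - B)²) / N`.
-/

open scoped Matrix

section Unitary

lemma star_mul_conjStarAlgAut_sub_mul {S R : Type*} [Ring R] [StarMul R] [SMul S R]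
    [IsScalarTower S R R] [SMulCommClass S R R] (U V : unitary R) (a b : R) :
    star (U : R) * (Unitary.conjStarAlgAut S R U a - Unitary.conjStarAlgAut S R V b) * V =
      a * (star U * V : unitary R) - (star U * V : unitary R) * b := by
  simp only [Unitary.conjStarAlgAut_apply, Submonoid.coe_mul, Unitary.coe_star, mul_sub, sub_mul,
    mul_assoc, Unitary.coe_star_mul_self, mul_one]
  simp only [← mul_assoc, Unitary.coe_star_mul_self, one_mul]

variable {𝕜 m n : Type*} [RCLike 𝕜] [Fintype n]

lemma mul_conjTranspose_self_apply_self (M : Matrix m n 𝕜) (i : m) :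
    (M * Mᴴ) i i = ((∑ j, ‖M i j‖ ^ 2 : ℝ) : 𝕜) := by
  simp only [Matrix.mul_apply, Matrix.conjTranspose_apply, RCLike.star_def, RCLike.mul_conj,
    RCLike.ofReal_sum, RCLike.ofReal_pow]

lemma trace_mul_conjTranspose_self [Fintype m] (M : Matrix m n 𝕜) :
    (M * Mᴴ).trace = ((∑ i, ∑ j, ‖M i j‖ ^ 2 : ℝ) : 𝕜) := by
  simp only [Matrix.trace, Matrix.diag_apply, mul_conjTranspose_self_apply_self,
    RCLike.ofReal_sum]

variable [DecidableEq n]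

lemma trace_mul_conjTranspose_self_unitary_mul_mul_unitary {R : Type*} [CommRing R] [StarRing R]
    [Fintype m] [DecidableEq m] {U : Matrix m m R} (hU : U ∈ Matrix.unitaryGroup m R)
    (M : Matrix m n R) {V : Matrix n n R} (hV : V ∈ Matrix.unitaryGroup n R) :
    ((U * M * V) * (U * M * V)ᴴ).trace = (M * Mᴴ).trace := by
  have hUU : Uᴴ * U = 1 := Unitary.star_mul_self_of_mem hU
  have hVV : V * Vᴴ = 1 := Unitary.mul_star_self_of_mem hV
  calc ((U * M * V) * (U * M * V)ᴴ).trace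
      = (U * (M * (V * Vᴴ) * Mᴴ * Uᴴ)).trace := by
        simp only [Matrix.conjTranspose_mul, Matrix.mul_assoc]
    _ = (M * Mᴴ * (Uᴴ * U)).trace := by
        rw [hVV, Matrix.mul_one, Matrix.trace_mul_comm, Matrix.mul_assoc]
    _ = (M * Mᴴ).trace := by rw [hUU, Matrix.mul_one]

/-- The matrix `(|U i j|²)` of squared moduli of the entries of a unitary matrix. For
`U = star E * F`, with orthonormal bases as the columns of `E` and `F`, its entries are the squared
overlaps of the basis vectors; they serve as transport weights. -/
def unistochasticMatrix (U : Matrix.unitaryGroup n 𝕜) : Matrix n n ℝ :=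
  .of fun i j ↦ ‖U i j‖ ^ 2

lemma unistochasticMatrix_apply (U : Matrix.unitaryGroup n 𝕜) (i j : n) :
    unistochasticMatrix U i j = ‖U i j‖ ^ 2 :=
  rfl

lemma unistochasticMatrix_star (U : Matrix.unitaryGroup n 𝕜) :
    unistochasticMatrix (star U) = (unistochasticMatrix U)ᵀ := by
  ext i j
  simp only [unistochasticMatrix_apply, Matrix.transpose_apply, Unitary.coe_star,
    Matrix.star_apply, norm_star]

lemma sum_unistochasticMatrix_row (U : Matrix.unitaryGroup n 𝕜) (i : n) :
    ∑ j, unistochasticMatrix U i j = 1 := by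
  have hU : (U : Matrix n n 𝕜) * (U : Matrix n n 𝕜)ᴴ = 1 := Unitary.coe_mul_star_self U
  have hdiag := mul_conjTranspose_self_apply_self (U : Matrix n n 𝕜) i
  rw [hU, Matrix.one_apply_eq] at hdiag
  exact_mod_cast hdiag.symm

lemma unistochasticMatrix_mem_doublyStochastic (U : Matrix.unitaryGroup n 𝕜) :
    unistochasticMatrix U ∈ doublyStochastic ℝ n := by
  refine mem_doublyStochastic_iff_sum.2
    ⟨fun _ _ ↦ sq_nonneg _, sum_unistochasticMatrix_row U, fun j ↦ ?_⟩
  simpa only [unistochasticMatrix_star, Matrix.transpose_apply] using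
    sum_unistochasticMatrix_row (star U) j

lemma norm_sq_diagonal_mul_sub_mul_diagonal_apply [Fintype m] [DecidableEq m] (W : Matrix m n 𝕜)
    (a : m → 𝕜) (b : n → 𝕜) (i : m) (j : n) :
    ‖(Matrix.diagonal a * W - W * Matrix.diagonal b) i j‖ ^ 2 =
      ‖W i j‖ ^ 2 * ‖a i - b j‖ ^ 2 := by
  rw [Matrix.sub_apply, Matrix.diagonal_mul, Matrix.mul_diagonal, mul_comm (a i), ← mul_sub,
    norm_mul, mul_pow]

lemma trace_sub_mul_conjTranspose_of_unitary_diagonalization {A B : Matrix n n 𝕜}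
    {U V : Matrix.unitaryGroup n 𝕜} {a b : n → 𝕜}
    (hA : A = Unitary.conjStarAlgAut 𝕜 _ U (.diagonal a))
    (hB : B = Unitary.conjStarAlgAut 𝕜 _ V (.diagonal b)) :
    ((A - B) * (A - B)ᴴ).trace =
      ((∑ i, ∑ j, unistochasticMatrix (star U * V) i j * ‖a i - b j‖ ^ 2 : ℝ) : 𝕜) := by
  rw [← trace_mul_conjTranspose_self_unitary_mul_mul_unitary (star U).2 (A - B) V.2,
    Unitary.coe_star, hA, hB, star_mul_conjStarAlgAut_sub_mul, trace_mul_conjTranspose_self]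
  simp only [norm_sq_diagonal_mul_sub_mul_diagonal_apply, unistochasticMatrix_apply]

lemma trace_sub_mul_self_of_isHermitian {A B : Matrix n n 𝕜}
    (hA : A.IsHermitian) (hB : B.IsHermitian) :
    ((A - B) * (A - B)).trace =
      ((∑ i, ∑ j, unistochasticMatrix (star hA.eigenvectorUnitary * hB.eigenvectorUnitary) i j *
        (hA.eigenvalues i - hB.eigenvalues j) ^ 2 : ℝ) : 𝕜) := by
  simpa only [(hA.sub hB).eq, Function.comp_apply, ← RCLike.ofReal_sub, RCLike.norm_ofReal, sq_abs]
    using trace_sub_mul_conjTranspose_of_unitary_diagonalization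
      hA.spectral_theorem hB.spectral_theorem

end Unitary

section DiscretePlan

variable {m n X Y : Type*} [Fintype m] [Fintype n] [MeasurableSpace X] [MeasurableSpace Y]

/-- The transport plan that moves mass `P i j` from the point `x i` to the point `y j`. -/
noncomputable def discretePlan (P : m → n → ENNReal) (x : m → X) (y : n → Y) : Measure (X × Y) :=
  ∑ i, ∑ j, P i j • Measure.dirac (x i, y j)

lemma map_discretePlan {Z : Type*} [MeasurableSpace Z] {f : X × Y → Z} (hf : Measurable f)
    (P : m → n → ENNReal) (x : m → X) (y : n → Y) :
    (discretePlan P x y).map f = ∑ i, ∑ j, P i j • Measure.dirac (f (x i, y j)) := by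
  simp only [discretePlan, Measure.map_finset_sum' hf.aemeasurable, Measure.map_smul,
    Measure.map_dirac' hf]

lemma map_fst_discretePlan (P : m → n → ENNReal) (x : m → X) (y : n → Y) :
    (discretePlan P x y).map Prod.fst = ∑ i, (∑ j, P i j) • Measure.dirac (x i) := by
  simp only [map_discretePlan measurable_fst, Finset.sum_smul]

lemma map_snd_discretePlan (P : m → n → ENNReal) (x : m → X) (y : n → Y) :
    (discretePlan P x y).map Prod.snd = ∑ j, (∑ i, P i j) • Measure.dirac (y j) := by
  simp only [map_discretePlan measurable_snd, Finset.sum_smul]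
  exact Finset.sum_comm

lemma lintegral_discretePlan (P : m → n → ENNReal) (x : m → X) (y : n → Y)
    {f : X × Y → ENNReal} (hf : Measurable f) :
    ∫⁻ p, f p ∂discretePlan P x y = ∑ i, ∑ j, P i j * f (x i, y j) := by
  simp only [discretePlan, lintegral_finsetSum_measure, lintegral_smul_measure,
    lintegral_dirac' _ hf, smul_eq_mul]

lemma W2sq_le_sum_mul_sq_sub (P : m → n → ENNReal) (x : m → ℝ) (y : n → ℝ) :
    W2sq (∑ i, (∑ j, P i j) • Measure.dirac (x i)) (∑ j, (∑ i, P i j) • Measure.dirac (y j)) ≤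
      ∑ i, ∑ j, P i j * ENNReal.ofReal ((x i - y j) ^ 2) := by
  refine (iInf₂_le (discretePlan P x y)
    ⟨map_fst_discretePlan P x y, map_snd_discretePlan P x y⟩).trans_eq ?_
  simp only [sq_abs]
  exact lintegral_discretePlan P x y (by fun_prop)

end DiscretePlan

section EmpiricalMeasure

variable {n : Type*} [Fintype n]

/-- The uniform average of the Dirac masses at the points `x k`; it is a probability measure when
`n` is nonempty, and the zero measure when `n` is empty. -/
noncomputable def empiricalMeasure {X : Type*} [MeasurableSpace X] (x : n → X) : Measure X :=
  (Fintype.card n : ENNReal)⁻¹ • ∑ k, Measure.dirac (x k)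

variable [DecidableEq n]

lemma W2sq_empiricalMeasure_le_of_mem_doublyStochastic {S : Matrix n n ℝ}
    (hS : S ∈ doublyStochastic ℝ n) (x y : n → ℝ) :
    W2sq (empiricalMeasure x) (empiricalMeasure y) ≤
      (Fintype.card n : ENNReal)⁻¹ * ENNReal.ofReal (∑ i, ∑ j, S i j * (x i - y j) ^ 2) := by
  have hnonneg (i j : n) : 0 ≤ S i j := nonneg_of_mem_doublyStochastic hS
  have hrow (i : n) : ∑ j, ENNReal.ofReal (S i j) = 1 := by
    rw [← ENNReal.ofReal_sum_of_nonneg fun j _ ↦ hnonneg i j,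
      sum_row_of_mem_doublyStochastic hS, ENNReal.ofReal_one]
  have hcol (j : n) : ∑ i, ENNReal.ofReal (S i j) = 1 := by
    rw [← ENNReal.ofReal_sum_of_nonneg fun i _ ↦ hnonneg i j,
      sum_col_of_mem_doublyStochastic hS, ENNReal.ofReal_one]
  have hcost : ENNReal.ofReal (∑ i, ∑ j, S i j * (x i - y j) ^ 2) =
      ∑ i, ∑ j, ENNReal.ofReal (S i j) * ENNReal.ofReal ((x i - y j) ^ 2) := by
    have hterm (i j : n) : 0 ≤ S i j * (x i - y j) ^ 2 := mul_nonneg (hnonneg i j) (sq_nonneg _)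
    rw [ENNReal.ofReal_sum_of_nonneg fun i _ ↦ Finset.sum_nonneg fun j _ ↦ hterm i j]
    simp only [ENNReal.ofReal_sum_of_nonneg fun j _ ↦ hterm _ j, ENNReal.ofReal_mul (hnonneg _ _)]
  have hplan := W2sq_le_sum_mul_sq_sub
    (fun i j ↦ (Fintype.card n : ENNReal)⁻¹ * ENNReal.ofReal (S i j)) x y
  simpa only [empiricalMeasure, hcost, mul_assoc, ← Finset.mul_sum, hrow, hcol, mul_one,
    ← Finset.smul_sum] using hplan

theorem wasserstein_hoffman_wielandt_general {𝕜 : Type*} [RCLike 𝕜] [Nonempty n]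
    {A B : Matrix n n 𝕜} (hA : A.IsHermitian) (hB : B.IsHermitian) :
    W2sq (empiricalMeasure hA.eigenvalues) (empiricalMeasure hB.eigenvalues) ≤
      ENNReal.ofReal (RCLike.re ((A - B) * (A - B)).trace / Fintype.card n) := by
  rw [trace_sub_mul_self_of_isHermitian hA hB, RCLike.ofReal_re,
    ENNReal.ofReal_div_of_pos (Nat.cast_pos.2 Fintype.card_pos), ENNReal.ofReal_natCast,
    ENNReal.div_eq_inv_mul]
  exact W2sq_empiricalMeasure_le_of_mem_doublyStochastic
    (unistochasticMatrix_mem_doublyStochastic _) _ _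

end EmpiricalMeasure

/-- The squared Wasserstein distance between the empirical spectral measures of
two real symmetric N×N matrices is at most (1/N) tr((A-B)²). -/
theorem wasserstein_hoffman_wielandt {N : ℕ} (hN : 0 < N)
    (A B : Matrix (Fin N) (Fin N) ℝ)
    (hA : A.IsHermitian) (hB : B.IsHermitian) :
    W2sq ((N : ENNReal)⁻¹ • ∑ k : Fin N, Measure.dirac (hA.eigenvalues k))
         ((N : ENNReal)⁻¹ • ∑ k : Fin N, Measure.dirac (hB.eigenvalues k))
      ≤ ENNReal.ofReal (Matrix.trace ((A - B) * (A - B)) / N) := by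
  have : Nonempty (Fin N) := Fin.pos_iff_nonempty.1 hN
  simpa only [empiricalMeasure, Fintype.card_fin, RCLike.re_to_real] using
    wasserstein_hoffman_wielandt_general hA hB
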